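/- Let E be a Banach space, T > 0, and let K be a Volterra kernel on [0,T] satisfying Condition (A) with exponent α ∈ [0, 1/4). Let ψ: [0,T]² → E be strongly λ-Hölder bi-continuous with λ > α. For s ∈ (0,T) define g_s: [0,T] → E by g_s(t) := K*(ψ(·,t))(s) = ψ(s,t) K(T,s) + ∫_s^T [ψ(r,t) − ψ(s,t)] (∂K(r,s)/∂r) dr. Then for all (s,t) ∈ (0,T)², K*(g_s)(t) = (K*⊗K*)ψ(s,t); i.e., the operator K*⊗K* coincides with the iterated application of K* in the first and then the second variable. -/

import Mathlib

open MeasureTheory Set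

noncomputable section

namespace YS

variable {E : Type*} [NormedAddCommGroup E] [NormedSpace ℝ E]

/-- A Volterra kernel: a measurable `K : ℝ² → ℝ` with `K t s = 0` whenever `s ≥ t`. -/
def IsVolterraKernel (K : ℝ → ℝ → ℝ) : Prop :=
  Measurable (Function.uncurry K) ∧ ∀ t s : ℝ, t ≤ s → K t s = 0

/-- Condition (A) with exponent `α` and constant `C`; here `K' t s` denotes the partial
derivative `∂K(t,s)/∂t`, whose existence is part of the condition. -/
def CondA (T α C : ℝ) (K K' : ℝ → ℝ → ℝ) : Prop :=
  (∀ s t : ℝ, 0 < s → s < t → t ≤ T → |K t s| ≤ C * s ^ (-α) * (t - s) ^ (-α)) ∧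
  ∀ s t : ℝ, 0 < s → s < t → t ≤ T →
    HasDerivAt (fun r => K r s) (K' t s) t ∧ |K' t s| ≤ C * (t - s) ^ (-(α + 1))

/-- The operator `𝒦*`:  `(𝒦*φ)(s) = φ(s)K(T,s) + ∫_s^T [φ(r) − φ(s)] ∂K(r,s)/∂r dr`. -/
def Kstar (T : ℝ) (K K' : ℝ → ℝ → ℝ) (φ : ℝ → E) (s : ℝ) : E :=
  K T s • φ s + ∫ r in s..T, K' r s • (φ r - φ s)

/-- The operator `A^K`. -/
def AK (T : ℝ) (K' : ℝ → ℝ → ℝ) (φ : ℝ → E) (s : ℝ) : E :=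
  ∫ r in s..T, K' r s • (φ r - φ s)

/-- Rectangular increment `f(u₁,u₂;v₁,v₂)`. -/
def rectInc (ψ : ℝ → ℝ → E) (u₁ u₂ v₁ v₂ : ℝ) : E :=
  ψ u₁ v₁ + ψ u₂ v₂ - ψ u₁ v₂ - ψ u₂ v₁

/-- The operator `B^K`. -/
def BK (T : ℝ) (K' : ℝ → ℝ → ℝ) (ψ : ℝ → ℝ → E) (u v : ℝ) : E :=
  ∫ r₂ in v..T, ∫ r₁ in u..T, (K' r₁ u * K' r₂ v) • rectInc ψ u r₁ v r₂

/-- The operator `𝒦* ⊗ 𝒦*`. -/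
def KstarT (T : ℝ) (K K' : ℝ → ℝ → ℝ) (ψ : ℝ → ℝ → E) (u v : ℝ) : E :=
  (K T u * K T v) • ψ u v + K T v • AK T K' (fun x => ψ x v) u +
    K T u • AK T K' (fun y => ψ u y) v + BK T K' ψ u v

/-- A partition `0 = s₀ < s₁ < ⋯ < s_n = T` of `[0,T]`. -/
structure Partition (T : ℝ) where
  n : ℕ
  pts : ℕ → ℝ
  n_pos : 0 < n
  first : pts 0 = 0
  last : pts n = T
  lt : ∀ i < n, pts i < pts (i + 1)

/-- Mesh of a partition: the largest increment. -/
def Partition.mesh {T : ℝ} (P : Partition T) : ℝ :=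
  (Finset.range P.n).sup' (Finset.nonempty_range_iff.mpr P.n_pos.ne')
    fun i => P.pts (i + 1) - P.pts i

/-- One-dimensional step approximation `φ^π`. -/
def step1 {T : ℝ} (P : Partition T) (φ : ℝ → E) (s : ℝ) : E :=
  ∑ i ∈ Finset.range P.n,
    (Set.Ico (P.pts i) (P.pts (i + 1))).indicator (fun _ => φ (P.pts i)) s

/-- Two-dimensional step approximation `ψ^π` for the grid partition `P × Q`. -/
def step2 {T : ℝ} (P Q : Partition T) (ψ : ℝ → ℝ → E) (u v : ℝ) : E :=
  ∑ i ∈ Finset.range P.n, ∑ j ∈ Finset.range Q.n,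
    ((Set.Ico (P.pts i) (P.pts (i + 1))) ×ˢ (Set.Ico (Q.pts j) (Q.pts (j + 1)))).indicator
      (fun _ => ψ (P.pts i) (Q.pts j)) (u, v)

/-- `λ`-Hölder continuity on `[0,T]` with constant `C`. -/
def IsHolderWith (T lam C : ℝ) (φ : ℝ → E) : Prop :=
  ∀ t₁ ∈ Icc (0:ℝ) T, ∀ t₂ ∈ Icc (0:ℝ) T, ‖φ t₁ - φ t₂‖ ≤ C * |t₁ - t₂| ^ lam

/-- `λ`-Hölder continuity on `[0,T]`. -/
def IsHolder (T lam : ℝ) (φ : ℝ → E) : Prop := ∃ C : ℝ, IsHolderWith T lam C φ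

/-- `λ`-Hölder bi-continuity with constant `C`. -/
def IsHolderBiWith (T lam C : ℝ) (ψ : ℝ → ℝ → E) : Prop :=
  (∀ u₁ ∈ Icc (0:ℝ) T, ∀ u₂ ∈ Icc (0:ℝ) T, ∀ v ∈ Icc (0:ℝ) T,
      ‖ψ u₂ v - ψ u₁ v‖ ≤ C * |u₂ - u₁| ^ lam) ∧
  ∀ u ∈ Icc (0:ℝ) T, ∀ v₁ ∈ Icc (0:ℝ) T, ∀ v₂ ∈ Icc (0:ℝ) T,
      ‖ψ u v₂ - ψ u v₁‖ ≤ C * |v₂ - v₁| ^ lam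

/-- `λ`-Hölder bi-continuity. -/
def IsHolderBi (T lam : ℝ) (ψ : ℝ → ℝ → E) : Prop := ∃ C : ℝ, IsHolderBiWith T lam C ψ

/-- Strong `λ`-Hölder bi-continuity with constant `C`. -/
def IsStrongHolderBiWith (T lam C : ℝ) (ψ : ℝ → ℝ → E) : Prop :=
  IsHolderBiWith T lam C ψ ∧
  ∀ u₁ ∈ Icc (0:ℝ) T, ∀ u₂ ∈ Icc (0:ℝ) T, ∀ v₁ ∈ Icc (0:ℝ) T, ∀ v₂ ∈ Icc (0:ℝ) T,
    ‖rectInc ψ u₁ u₂ v₁ v₂‖ ≤ C * |u₂ - u₁| ^ lam * |v₂ - v₁| ^ lam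

/-- Strong `λ`-Hölder bi-continuity. -/
def IsStrongHolderBi (T lam : ℝ) (ψ : ℝ → ℝ → E) : Prop :=
  ∃ C : ℝ, IsStrongHolderBiWith T lam C ψ

/-- The covariance function `R(s,t) = ∫_0^{s∧t} K(t,r)K(s,r) dr` of the Volterra process. -/
def covR (K : ℝ → ℝ → ℝ) (s t : ℝ) : ℝ := ∫ r in (0:ℝ)..(min s t), K t r * K s r

/-- The 2D Riemann–Stieltjes sum of `f` against `g` over the grid partition `P × Q`. -/
def RSsum {T : ℝ} (P Q : Partition T) (f g : ℝ → ℝ → ℝ) : ℝ :=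
  ∑ i ∈ Finset.range P.n, ∑ j ∈ Finset.range Q.n,
    f (P.pts i) (Q.pts j) *
      rectInc g (P.pts i) (P.pts (i + 1)) (Q.pts j) (Q.pts (j + 1))

/-!
`𝒦*` is multiplication by `K(T, ·)` plus the linear operator `A`, and `B` is `A` applied in one
variable after the other, so the identity reduces to the linearity of `A`. The point is that every
integral involved converges. A kernel derivative of order `(r - s)^(-(α + 1))` is integrable against
`λ`-Hölder increments when `α < λ`, and the bound on the rectangular increments of `ψ` makes
`v ↦ A(ψ(·, v))(s)` Hölder again, so that `A` can be applied a second time.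
-/

theorem aestronglyMeasurable_of_hasDerivAt {𝕜 F : Type*} [NontriviallyNormedField 𝕜]
    [MeasurableSpace 𝕜] [OpensMeasurableSpace 𝕜] [NormedAddCommGroup F] [NormedSpace 𝕜 F]
    [CompleteSpace F] [SecondCountableTopologyEither 𝕜 F] {f f' : 𝕜 → F} {S : Set 𝕜}
    {μ : Measure 𝕜} (hS : MeasurableSet S) (hf : ∀ x ∈ S, HasDerivAt f (f' x) x) :
    AEStronglyMeasurable f' (μ.restrict S) :=
  (aestronglyMeasurable_deriv f _).congr <|
    (ae_restrict_mem hS).mono fun x hx => (hf x hx).deriv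

theorem intervalIntegrable_sub_rpow {a b c p : ℝ} (hp : -1 < p) :
    IntervalIntegrable (fun x => (x - c) ^ p) volume a b := by
  simpa using
    (intervalIntegral.intervalIntegrable_rpow' (a := a - c) (b := b - c) hp).comp_sub_right c

section Holder

variable {F : Type*} [NormedAddCommGroup F] {T lam C : ℝ} {φ : ℝ → F} {ψ : ℝ → ℝ → F}

theorem IsHolderWith.continuousOn (hφ : IsHolderWith T lam C φ) (hlam : 0 < lam) :
    ContinuousOn φ (Icc 0 T) := by
  intro x hx
  have hbound : Continuous fun y : ℝ => C * |y - x| ^ lam := by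
    fun_prop (disch := exact hlam.le)
  refine tendsto_iff_norm_sub_tendsto_zero.2 (squeeze_zero' (.of_forall fun _ => norm_nonneg _)
    (eventually_mem_nhdsWithin.mono fun y hy => hφ y hy x hx) ?_)
  simpa [hlam.ne'] using (hbound.tendsto x).mono_left nhdsWithin_le_nhds

theorem IsHolderBiWith.isHolderWith_left (hψ : IsHolderBiWith T lam C ψ) {v : ℝ}
    (hv : v ∈ Icc 0 T) : IsHolderWith T lam C fun u => ψ u v :=
  fun u₂ hu₂ u₁ hu₁ => hψ.1 u₁ hu₁ u₂ hu₂ v hv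

theorem IsHolderBiWith.isHolderWith_right (hψ : IsHolderBiWith T lam C ψ) {u : ℝ}
    (hu : u ∈ Icc 0 T) : IsHolderWith T lam C fun v => ψ u v :=
  fun v₂ hv₂ v₁ hv₁ => hψ.2 u hu v₁ hv₁ v₂ hv₂

theorem rectInc_eq_sub_sub_sub (ψ : ℝ → ℝ → F) (u₁ u₂ v₁ v₂ : ℝ) :
    rectInc ψ u₁ u₂ v₁ v₂ = (ψ u₂ v₂ - ψ u₂ v₁) - (ψ u₁ v₂ - ψ u₁ v₁) := by
  rw [rectInc]
  abel

theorem IsStrongHolderBiWith.isHolderWith_sub (hψ : IsStrongHolderBiWith T lam C ψ) {v₁ v₂ : ℝ}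
    (hv₁ : v₁ ∈ Icc 0 T) (hv₂ : v₂ ∈ Icc 0 T) :
    IsHolderWith T lam (C * |v₂ - v₁| ^ lam) fun u => ψ u v₂ - ψ u v₁ := by
  intro u₂ hu₂ u₁ hu₁
  rw [← rectInc_eq_sub_sub_sub, mul_right_comm]
  exact hψ.2 u₁ hu₁ u₂ hu₂ v₁ hv₁ v₂ hv₂

end Holder

section Operators

variable {T s t : ℝ} {K' : ℝ → ℝ → ℝ} {φ φ₁ φ₂ : ℝ → E} {ψ : ℝ → ℝ → E}

/-- Convergence of the integral defining `AK T K' φ s`. Without it the linearity of `AK` fails,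
because divergent integrals have the junk value `0`. -/
def AKIntegrable (T : ℝ) (K' : ℝ → ℝ → ℝ) (φ : ℝ → E) (s : ℝ) : Prop :=
  IntervalIntegrable (fun r => K' r s • (φ r - φ s)) volume s T

theorem AKIntegrable.const_smul (hφ : AKIntegrable T K' φ s) (c : ℝ) :
    AKIntegrable T K' (fun r => c • φ r) s := by
  simp only [AKIntegrable, ← smul_sub, smul_comm _ c]
  exact IntervalIntegrable.smul hφ c

theorem AK_const_smul (c : ℝ) : AK T K' (fun r => c • φ r) s = c • AK T K' φ s := by
  simp only [AK, ← smul_sub, smul_comm _ c, intervalIntegral.integral_smul]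

theorem AK_add (hφ₁ : AKIntegrable T K' φ₁ s) (hφ₂ : AKIntegrable T K' φ₂ s) :
    AK T K' (fun r => φ₁ r + φ₂ r) s = AK T K' φ₁ s + AK T K' φ₂ s := by
  simp only [AK, ← intervalIntegral.integral_add hφ₁ hφ₂, ← smul_add, add_sub_add_comm]

theorem AK_sub (hφ₁ : AKIntegrable T K' φ₁ s) (hφ₂ : AKIntegrable T K' φ₂ s) :
    AK T K' (fun r => φ₁ r - φ₂ r) s = AK T K' φ₁ s - AK T K' φ₂ s := by
  simp only [AK, ← intervalIntegral.integral_sub hφ₁ hφ₂, ← smul_sub, sub_sub_sub_comm]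

theorem BK_eq_AK_AK (htT : t ≤ T)
    (hψ : ∀ v ∈ Icc t T, AKIntegrable T K' (fun u => ψ u v) s) :
    BK T K' ψ s t = AK T K' (fun v => AK T K' (fun u => ψ u v) s) t := by
  refine intervalIntegral.integral_congr fun v hv => ?_
  rw [uIcc_of_le htT] at hv
  calc ∫ u in s..T, (K' u s * K' v t) • rectInc ψ s u t v
      = K' v t • AK T K' (fun u => ψ u v - ψ u t) s := by
        simp only [AK, ← intervalIntegral.integral_smul, rectInc_eq_sub_sub_sub, smul_smul,
          mul_comm (K' v t)]
    _ = K' v t • (AK T K' (fun u => ψ u v) s - AK T K' (fun u => ψ u t) s) := by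
        rw [AK_sub (hψ v hv) (hψ t (left_mem_Icc.2 htT))]

end Operators

section Kernel

variable {T lam α C s : ℝ} {K K' : ℝ → ℝ → ℝ} {φ : ℝ → E} {ψ : ℝ → ℝ → E}

/-- `K'(·, s)` is the derivative of `K(·, s)` on `(s, T]` and satisfies
`∫_s^T (r - s)^λ |K'(r, s)| dr < ∞`, so that it can be integrated against the increments at `s` of
any `λ`-Hölder function. This is what Condition (A) is used for. -/
structure HasHolderIntegrableDeriv (T lam : ℝ) (K K' : ℝ → ℝ → ℝ) (s : ℝ) : Prop where
  hasDerivAt : ∀ r ∈ Ioc s T, HasDerivAt (fun r => K r s) (K' r s) r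
  intervalIntegrable : IntervalIntegrable (fun r => (r - s) ^ lam * |K' r s|) volume s T

theorem CondA.hasHolderIntegrableDeriv (hA : CondA T α C K K') (hαlam : α < lam)
    (hs : s ∈ Ioc 0 T) : HasHolderIntegrableDeriv T lam K K' s where
  hasDerivAt r hr := (hA.2 s r hs.1 hr.1 hr.2).1
  intervalIntegrable := by
    have hpow : IntervalIntegrable (fun r => C * (r - s) ^ (lam - (α + 1))) volume s T :=
      (intervalIntegrable_sub_rpow (by linarith)).const_mul C
    have hderiv : AEStronglyMeasurable (fun r => K' r s) (volume.restrict (Ioc s T)) :=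
      aestronglyMeasurable_of_hasDerivAt measurableSet_Ioc
        fun r hr => (hA.2 s r hs.1 hr.1 hr.2).1
    have hweight : Measurable fun r => (r - s) ^ lam := by fun_prop
    have hbound : ∀ r ∈ Ioc s T,
        ‖(r - s) ^ lam * |K' r s|‖ ≤ C * (r - s) ^ (lam - (α + 1)) := by
      intro r hr
      have hpos : 0 < r - s := sub_pos.2 hr.1
      calc ‖(r - s) ^ lam * |K' r s|‖ = (r - s) ^ lam * |K' r s| :=
            Real.norm_of_nonneg (by positivity)
        _ ≤ (r - s) ^ lam * (C * (r - s) ^ (-(α + 1))) := by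
            gcongr
            exact (hA.2 s r hs.1 hr.1 hr.2).2
        _ = C * (r - s) ^ (lam - (α + 1)) := by
            rw [sub_eq_add_neg lam, Real.rpow_add hpos]
            ring
    rw [intervalIntegrable_iff_integrableOn_Ioc_of_le hs.2] at hpow ⊢
    exact hpow.mono' (hweight.aestronglyMeasurable.mul hderiv.norm) <|
      (ae_restrict_mem measurableSet_Ioc).mono hbound

theorem IsHolderWith.norm_smul_sub_le (hφ : IsHolderWith T lam C φ) {r : ℝ}
    (hs : s ∈ Icc 0 T) (hr : r ∈ Ioc s T) (k : ℝ) :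
    ‖k • (φ r - φ s)‖ ≤ C * ((r - s) ^ lam * |k|) := by
  calc ‖k • (φ r - φ s)‖ = |k| * ‖φ r - φ s‖ := norm_smul _ _
    _ ≤ |k| * (C * |r - s| ^ lam) := by
      gcongr
      exact hφ r ⟨hs.1.trans hr.1.le, hr.2⟩ s hs
    _ = C * ((r - s) ^ lam * |k|) := by
      rw [abs_of_pos (sub_pos.2 hr.1)]
      ring

theorem HasHolderIntegrableDeriv.akIntegrable (hK : HasHolderIntegrableDeriv T lam K K' s)
    (hφ : IsHolderWith T lam C φ) (hlam : 0 < lam) (hs : s ∈ Icc 0 T) :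
    AKIntegrable T K' φ s := by
  have hsub : Ioc s T ⊆ Icc 0 T := Ioc_subset_Icc_self.trans (Icc_subset_Icc_left hs.1)
  have hmeas : AEStronglyMeasurable (fun r => φ r - φ s) (volume.restrict (Ioc s T)) :=
    (((hφ.continuousOn hlam).mono hsub).sub continuousOn_const).aestronglyMeasurable
      measurableSet_Ioc
  have hderiv : AEStronglyMeasurable (fun r => K' r s) (volume.restrict (Ioc s T)) :=
    aestronglyMeasurable_of_hasDerivAt measurableSet_Ioc hK.hasDerivAt
  have hdom := hK.intervalIntegrable.const_mul C
  rw [AKIntegrable, intervalIntegrable_iff_integrableOn_Ioc_of_le hs.2]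
  rw [intervalIntegrable_iff_integrableOn_Ioc_of_le hs.2] at hdom
  exact hdom.mono' (hderiv.smul hmeas) <|
    (ae_restrict_mem measurableSet_Ioc).mono fun r hr => hφ.norm_smul_sub_le hs hr _

theorem IsHolderWith.norm_AK_le (hφ : IsHolderWith T lam C φ)
    (hK' : IntervalIntegrable (fun r => (r - s) ^ lam * |K' r s|) volume s T)
    (hs : s ∈ Icc 0 T) :
    ‖AK T K' φ s‖ ≤ C * ∫ r in s..T, (r - s) ^ lam * |K' r s| := by
  rw [← intervalIntegral.integral_const_mul]
  exact intervalIntegral.norm_integral_le_of_norm_le hs.2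
    (.of_forall fun r hr => hφ.norm_smul_sub_le hs hr _) (hK'.const_mul C)

theorem IsStrongHolderBiWith.isHolderWith_AK (hψ : IsStrongHolderBiWith T lam C ψ)
    (hK : HasHolderIntegrableDeriv T lam K K' s) (hlam : 0 < lam) (hs : s ∈ Icc 0 T) :
    IsHolderWith T lam (C * ∫ r in s..T, (r - s) ^ lam * |K' r s|)
      fun v => AK T K' (fun u => ψ u v) s := by
  intro v₂ hv₂ v₁ hv₁
  rw [← AK_sub (hK.akIntegrable (hψ.1.isHolderWith_left hv₂) hlam hs)
    (hK.akIntegrable (hψ.1.isHolderWith_left hv₁) hlam hs), mul_right_comm]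
  exact (hψ.isHolderWith_sub hv₁ hv₂).norm_AK_le hK.intervalIntegrable hs

end Kernel

theorem kstar_iterated_eq_kstarT_general [CompleteSpace E] {T lam s t : ℝ} {K K' : ℝ → ℝ → ℝ}
    {ψ : ℝ → ℝ → E} (hψ : IsStrongHolderBi T lam ψ) (hlam : 0 < lam)
    (hs : s ∈ Icc 0 T) (ht : t ∈ Icc 0 T) (hKs : HasHolderIntegrableDeriv T lam K K' s)
    (hKt : HasHolderIntegrableDeriv T lam K K' t) :
    Kstar T K K' (fun t' => Kstar T K K' (fun r => ψ r t') s) t = KstarT T K K' ψ s t := by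
  obtain ⟨C, hψ⟩ := hψ
  let A₁ψ : ℝ → E := fun v => AK T K' (fun u => ψ u v) s
  have hAψ : AKIntegrable T K' (ψ s) t :=
    hKt.akIntegrable (hψ.1.isHolderWith_right hs) hlam ht
  have hAA₁ψ : AKIntegrable T K' A₁ψ t :=
    hKt.akIntegrable (hψ.isHolderWith_AK hKs hlam hs) hlam ht
  have hB : BK T K' ψ s t = AK T K' A₁ψ t := BK_eq_AK_AK ht.2 fun v hv =>
    hKs.akIntegrable (hψ.1.isHolderWith_left (Icc_subset_Icc_left ht.1 hv)) hlam hs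
  calc Kstar T K K' (fun t' => Kstar T K K' (fun r => ψ r t') s) t
      = K T t • (K T s • ψ s t + A₁ψ t) + AK T K' (fun v => K T s • ψ s v + A₁ψ v) t := rfl
    _ = K T t • (K T s • ψ s t + A₁ψ t) + (K T s • AK T K' (ψ s) t + AK T K' A₁ψ t) := by
        rw [AK_add (hAψ.const_smul _) hAA₁ψ, AK_const_smul]
    _ = KstarT T K K' ψ s t := by
        rw [KstarT, hB]
        module

/-- Lemma 3.2: the operator `𝒦* ⊗ 𝒦*` coincides with the iterated
application of `𝒦*`, first in the first and then in the second variable. -/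
theorem kstar_iterated_eq_kstarT {E : Type*} [NormedAddCommGroup E] [NormedSpace ℝ E]
    [CompleteSpace E] (T α lam : ℝ) (hT : 0 < T) (hα : 0 ≤ α) (hα' : α < 1 / 4)
    (K K' : ℝ → ℝ → ℝ) (hK : IsVolterraKernel K) (hA : ∃ C : ℝ, CondA T α C K K')
    (ψ : ℝ → ℝ → E) (hlam : 0 < lam) (hlam' : lam ≤ 1)
    (hψ : IsStrongHolderBi T lam ψ) (hαlam : α < lam) :
    ∀ s ∈ Ioo (0:ℝ) T, ∀ t ∈ Ioo (0:ℝ) T,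
      Kstar T K K' (fun t' => Kstar T K K' (fun r => ψ r t') s) t =
        KstarT T K K' ψ s t := by
  obtain ⟨C, hA⟩ := hA
  exact fun s hs t ht => kstar_iterated_eq_kstarT_general hψ hlam
    (Ioo_subset_Icc_self hs) (Ioo_subset_Icc_self ht)
    (hA.hasHolderIntegrableDeriv hαlam (Ioo_subset_Ioc_self hs))
    (hA.hasHolderIntegrableDeriv hαlam (Ioo_subset_Ioc_self ht))

end YS
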